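/- Let l_1,…,l_n and r_1,…,r_n be d-dimensional bit vectors and let ℓ ≥ 1, p ∈ {0,1}, q ≥ 0 be integers, and let G = G_{L,R,ℓ,p,q}. For every 1 ≤ i ≤ n and every 1 ≤ i' ≤ n with i' ≠ i, dist_G(u_i^L, v_{i'}^L) = 3ℓ − p and dist_G(u_i^R, v_{i'}^R) = 3ℓ − p. -/

import Mathlib

namespace GraphOV

/-- Two bit vectors (functions into `Fin 2`) are orthogonal if in every coordinate
at least one of them is `0`. -/
def Orth {d : ℕ} (a b : Fin d → Fin 2) : Prop := ∀ k, a k = 0 ∨ b k = 0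

/-- A system of internally disjoint paths joining exterior vertices from `E`:
for each path name `i : ι` we record its two endpoints and its length. -/
structure PathSys (E : Type) (ι : Type) where
  src : ι → E
  dst : ι → E
  len : ι → ℕ

namespace PathSys

variable {E ι : Type}

/-- Endpoints of zero-length paths get identified. -/
def idRel (S : PathSys E ι) (a b : E) : Prop :=
  ∃ i, S.len i = 0 ∧ S.src i = a ∧ S.dst i = b

/-- Vertices of the glued graph: exterior vertices (up to identification) together
with, for each path of length `m`, fresh interior vertices at positions `1,…,m-1`. -/
def Vert (S : PathSys E ι) : Type :=
  Quot S.idRel ⊕ Σ i : ι, {t : ℕ // 0 < t ∧ t < S.len i}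

/-- The vertex corresponding to an exterior vertex. -/
def ext (S : PathSys E ι) (a : E) : S.Vert := Sum.inl (Quot.mk _ a)

/-- The `t`-th vertex on the path named `i` (for `0 ≤ t ≤ S.len i`). -/
def pt (S : PathSys E ι) (i : ι) (t : ℕ) : S.Vert :=
  if h : 0 < t ∧ t < S.len i then Sum.inr ⟨i, t, h⟩
  else if t = 0 then S.ext (S.src i) else S.ext (S.dst i)

/-- The glued graph: consecutive vertices on each path are adjacent. -/
def graph (S : PathSys E ι) : SimpleGraph S.Vert :=
  SimpleGraph.fromRel fun a b =>
    ∃ i t, t + 1 ≤ S.len i ∧ a = S.pt i t ∧ b = S.pt i (t + 1)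

/-- The set of vertices lying on the path named `i`. -/
def onPath (S : PathSys E ι) (i : ι) : Set S.Vert :=
  {v | ∃ t ≤ S.len i, v = S.pt i t}

/-- A walk in the glued graph contains the path named `i` entirely if all vertices of
that path occur consecutively (in forward or backward order) on the walk. -/
def WalkContainsPath (S : PathSys E ι) {x y : S.Vert} (W : S.graph.Walk x y) (i : ι) : Prop :=
  ∃ a, a + S.len i ≤ W.length ∧
    ((∀ t ≤ S.len i, W.getVert (a + t) = S.pt i t) ∨
     (∀ t ≤ S.len i, W.getVert (a + t) = S.pt i (S.len i - t)))

end PathSys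

/-- The exterior vertices of the graph `G_{L,R,ℓ,p,q}`. -/
inductive Ext (n d : ℕ) : Type
  | uL : Fin n → Ext n d
  | uR : Fin n → Ext n d
  | vL : Fin n → Ext n d
  | vR : Fin n → Ext n d
  | wL : Fin d → Ext n d
  | wR : Fin d → Ext n d
  | xL : Ext n d
  | xR : Ext n d
  | yL : Ext n d
  | yR : Ext n d

/-- Names for the paths of the graph `G_{L,R,ℓ,p,q}`. -/
inductive Idx (n d : ℕ) (l r : Fin n → Fin d → Fin 2) : Type
  | uvL : Fin n → Idx n d l r
  | uvR : Fin n → Idx n d l r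
  | vxL : Fin n → Idx n d l r
  | vxR : Fin n → Idx n d l r
  | vwL : (i : Fin n) → (k : Fin d) → l i k = 1 → Idx n d l r
  | vwR : (j : Fin n) → (k : Fin d) → r j k = 1 → Idx n d l r
  | ywL : Fin d → Idx n d l r
  | ywR : Fin d → Idx n d l r
  | ww : Fin d → Idx n d l r
  | xyL : Idx n d l r
  | xyR : Idx n d l r
  | yy : Idx n d l r

/-- The path system defining the graph `G_{L,R,ℓ,p,q}`. -/
def sys (n d : ℕ) (l r : Fin n → Fin d → Fin 2) (ℓ p q : ℕ) :
    PathSys (Ext n d) (Idx n d l r) where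
  src := fun i => match i with
    | .uvL i => .uL i
    | .uvR i => .uR i
    | .vxL i => .vL i
    | .vxR i => .vR i
    | .vwL i _ _ => .vL i
    | .vwR j _ _ => .vR j
    | .ywL _ => .yL
    | .ywR _ => .yR
    | .ww k => .wL k
    | .xyL => .xL
    | .xyR => .xR
    | .yy => .yL
  dst := fun i => match i with
    | .uvL i => .vL i
    | .uvR i => .vR i
    | .vxL _ => .xL
    | .vxR _ => .xR
    | .vwL _ k _ => .wL k
    | .vwR _ k _ => .wR k
    | .ywL k => .wL k
    | .ywR k => .wR k
    | .ww k => .wR k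
    | .xyL => .yL
    | .xyR => .yR
    | .yy => .yR
  len := fun i => match i with
    | .uvL _ => ℓ - p
    | .uvR _ => ℓ - p
    | .vxL _ => ℓ
    | .vxR _ => ℓ
    | .vwL _ _ _ => ℓ
    | .vwR _ _ _ => ℓ
    | .ywL _ => ℓ
    | .ywR _ => ℓ
    | .ww _ => q
    | .xyL => ℓ - p
    | .xyR => ℓ - p
    | .yy => p + q

/-- The set `P_i^L`. -/
def PL (n d : ℕ) (l r : Fin n → Fin d → Fin 2) (ℓ p q : ℕ) (i : Fin n) :
    Set (sys n d l r ℓ p q).Vert :=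
  (sys n d l r ℓ p q).onPath (.uvL i) ∪
    ((sys n d l r ℓ p q).onPath (.vxL i) \ {(sys n d l r ℓ p q).ext .xL}) ∪
    ⋃ (k : Fin d) (h : l i k = 1),
      ((sys n d l r ℓ p q).onPath (.vwL i k h) \ {(sys n d l r ℓ p q).ext (.wL k)})

/-- The set `P_j^R`. -/
def PR (n d : ℕ) (l r : Fin n → Fin d → Fin 2) (ℓ p q : ℕ) (j : Fin n) :
    Set (sys n d l r ℓ p q).Vert :=
  (sys n d l r ℓ p q).onPath (.uvR j) ∪
    ((sys n d l r ℓ p q).onPath (.vxR j) \ {(sys n d l r ℓ p q).ext .xR}) ∪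
    ⋃ (k : Fin d) (h : r j k = 1),
      ((sys n d l r ℓ p q).onPath (.vwR j k h) \ {(sys n d l r ℓ p q).ext (.wR k)})

/-- The set `V^L`. -/
def VL (n d : ℕ) (l r : Fin n → Fin d → Fin 2) (ℓ p q : ℕ) :
    Set (sys n d l r ℓ p q).Vert := ⋃ i : Fin n, PL n d l r ℓ p q i

/-- The set `V^R`. -/
def VR (n d : ℕ) (l r : Fin n → Fin d → Fin 2) (ℓ p q : ℕ) :
    Set (sys n d l r ℓ p q).Vert := ⋃ j : Fin n, PR n d l r ℓ p q j

/-- The set `V^M` of all remaining vertices. -/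
def VM (n d : ℕ) (l r : Fin n → Fin d → Fin 2) (ℓ p q : ℕ) :
    Set (sys n d l r ℓ p q).Vert := (VL n d l r ℓ p q ∪ VR n d l r ℓ p q)ᶜ

namespace PathSys

theorem walk_pt {E ι : Type} (S : PathSys E ι) (i : ι) (t : ℕ) (ht : t ≤ S.len i) :
    ∃ W : S.graph.Walk (S.pt i 0) (S.pt i t), W.length ≤ t := by
  induction t with
  | zero => exact ⟨.nil, by simp⟩
  | succ t ih =>
    obtain ⟨W, hW⟩ := ih (by omega)
    by_cases h : S.pt i t = S.pt i (t + 1)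
    · rw [← h]
      exact ⟨W, by omega⟩
    · have hadj : S.graph.Adj (S.pt i t) (S.pt i (t + 1)) := by
        unfold graph
        rw [SimpleGraph.fromRel_adj]
        exact ⟨h, Or.inl ⟨i, t, ht, rfl, rfl⟩⟩
      refine ⟨W.concat hadj, ?_⟩
      rw [SimpleGraph.Walk.length_concat]
      omega

theorem pt_zero {E ι : Type} (S : PathSys E ι) (i : ι) : S.pt i 0 = S.ext (S.src i) := by
  simp [pt]

theorem pt_len {E ι : Type} (S : PathSys E ι) (i : ι) :
    S.pt i (S.len i) = S.ext (S.dst i) := by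
  by_cases h : S.len i = 0
  · rw [h, pt_zero]
    unfold ext
    exact congrArg Sum.inl (Quot.sound ⟨i, h, rfl, rfl⟩)
  · simp [pt, h]

theorem walk_path {E ι : Type} (S : PathSys E ι) (i : ι) :
    ∃ W : S.graph.Walk (S.ext (S.src i)) (S.ext (S.dst i)), W.length ≤ S.len i := by
  have := S.walk_pt i (S.len i) le_rfl
  rwa [pt_zero, pt_len] at this

/-- Extension of a potential on the exterior vertices to all vertices. -/
def pot {E ι : Type} (S : PathSys E ι) (f : E → ℤ)
    (hf : ∀ i, |f (S.src i) - f (S.dst i)| ≤ S.len i) : S.Vert → ℤ :=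
  Sum.elim
    (Quot.lift f (by
      rintro a b ⟨i, h0, rfl, rfl⟩
      have := hf i
      rw [h0] at this
      have := abs_le.1 this
      push_cast at this
      omega))
    (fun x => min (f (S.src x.1) + x.2.1) (f (S.dst x.1) + S.len x.1 - x.2.1))

theorem pot_pt {E ι : Type} (S : PathSys E ι) (f : E → ℤ)
    (hf : ∀ i, |f (S.src i) - f (S.dst i)| ≤ S.len i) (i : ι) (t : ℕ) (ht : t ≤ S.len i) :
    S.pot f hf (S.pt i t) = min (f (S.src i) + t) (f (S.dst i) + S.len i - t) := by
  have h1 := abs_le.1 (hf i)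
  by_cases h : 0 < t ∧ t < S.len i
  · have e : S.pt i t = Sum.inr ⟨i, t, h⟩ := dif_pos h
    rw [e]
    rfl
  · by_cases h0 : t = 0
    · subst h0
      rw [pt_zero]
      change f (S.src i) = _
      push_cast
      omega
    · have : t = S.len i := by omega
      subst this
      rw [pt_len]
      change f (S.dst i) = _
      omega

theorem pot_walk {E ι : Type} (S : PathSys E ι) (f : E → ℤ)
    (hf : ∀ i, |f (S.src i) - f (S.dst i)| ≤ S.len i) {a b : S.Vert} (W : S.graph.Walk a b) :
    S.pot f hf b - S.pot f hf a ≤ W.length := by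
  induction W with
  | nil => simp
  | cons h W ih =>
    rw [SimpleGraph.Walk.length_cons]
    replace h := (SimpleGraph.fromRel_adj _ _ _).1 h
    push_cast
    obtain ⟨-, ⟨i, t, ht, rfl, rfl⟩ | ⟨i, t, ht, rfl, rfl⟩⟩ := h
    all_goals
      rw [pot_pt _ _ _ _ _ (by omega)] at ih ⊢
      have e1 := S.pot_pt f hf i t (by omega)
      have e2 := S.pot_pt f hf i (t+1) ht
      push_cast at *
      omega

theorem dist_eq {E ι : Type} (S : PathSys E ι) (f : E → ℤ)
    (hf : ∀ i, |f (S.src i) - f (S.dst i)| ≤ S.len i) (a b : E) (m : ℕ)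
    (hm : (m : ℤ) ≤ f b - f a)
    (hW : ∃ W : S.graph.Walk (S.ext a) (S.ext b), W.length ≤ m) :
    S.graph.dist (S.ext a) (S.ext b) = m := by
  obtain ⟨W, hW⟩ := hW
  obtain ⟨W', hW'⟩ := W.reachable.exists_walk_length_eq_dist
  have h1 := SimpleGraph.dist_le W
  have h2 : f b - f a ≤ W'.length := S.pot_walk f hf W'
  omega

end PathSys

/-- Potential for the left side. -/
def fL {n d : ℕ} (ℓ p : ℤ) (i : Fin n) : Ext n d → ℤ
  | .uL j => if j = i then 0 else 3 * ℓ - p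
  | .vL j => if j = i then ℓ - p else 3 * ℓ - p
  | _ => 2 * ℓ - p

/-- Potential for the right side. -/
def fR {n d : ℕ} (ℓ p : ℤ) (i : Fin n) : Ext n d → ℤ
  | .uR j => if j = i then 0 else 3 * ℓ - p
  | .vR j => if j = i then ℓ - p else 3 * ℓ - p
  | _ => 2 * ℓ - p

theorem dist_u_to_v' (n d ℓ p q : ℕ) (hn : 1 ≤ n) (hd : 1 ≤ d) (hℓ : 1 ≤ ℓ)
    (hp : p ≤ 1) (l r : Fin n → Fin d → Fin 2) :
    ∀ i i' : Fin n, i' ≠ i →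
      (sys n d l r ℓ p q).graph.dist ((sys n d l r ℓ p q).ext (.uL i))
        ((sys n d l r ℓ p q).ext (.vL i')) = 3 * ℓ - p ∧
      (sys n d l r ℓ p q).graph.dist ((sys n d l r ℓ p q).ext (.uR i))
        ((sys n d l r ℓ p q).ext (.vR i')) = 3 * ℓ - p := by
  intro i i' hne
  constructor
  · refine PathSys.dist_eq _ (fL ℓ p i) ?_ _ _ _ ?_ ?_
    · intro j
      rw [abs_le]
      cases j <;> simp only [sys, fL] <;> (try split_ifs) <;> push_cast <;> omega
    · simp only [fL, if_neg hne, if_true]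
      omega
    · obtain ⟨W1, h1⟩ : ∃ W : (sys n d l r ℓ p q).graph.Walk ((sys n d l r ℓ p q).ext (.uL i))
          ((sys n d l r ℓ p q).ext (.vL i)), W.length ≤ ℓ - p :=
        (sys n d l r ℓ p q).walk_path (.uvL i)
      obtain ⟨W2, h2⟩ : ∃ W : (sys n d l r ℓ p q).graph.Walk ((sys n d l r ℓ p q).ext (.vL i))
          ((sys n d l r ℓ p q).ext (.xL)), W.length ≤ ℓ :=
        (sys n d l r ℓ p q).walk_path (.vxL i)
      obtain ⟨W3, h3⟩ : ∃ W : (sys n d l r ℓ p q).graph.Walk ((sys n d l r ℓ p q).ext (.vL i'))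
          ((sys n d l r ℓ p q).ext (.xL)), W.length ≤ ℓ :=
        (sys n d l r ℓ p q).walk_path (.vxL i')
      refine ⟨W1.append (W2.append W3.reverse), ?_⟩
      rw [SimpleGraph.Walk.length_append, SimpleGraph.Walk.length_append,
        SimpleGraph.Walk.length_reverse]
      omega
  · refine PathSys.dist_eq _ (fR ℓ p i) ?_ _ _ _ ?_ ?_
    · intro j
      rw [abs_le]
      cases j <;> simp only [sys, fR] <;> (try split_ifs) <;> push_cast <;> omega
    · simp only [fR, if_neg hne, if_true]
      omega
    · obtain ⟨W1, h1⟩ : ∃ W : (sys n d l r ℓ p q).graph.Walk ((sys n d l r ℓ p q).ext (.uR i))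
          ((sys n d l r ℓ p q).ext (.vR i)), W.length ≤ ℓ - p :=
        (sys n d l r ℓ p q).walk_path (.uvR i)
      obtain ⟨W2, h2⟩ : ∃ W : (sys n d l r ℓ p q).graph.Walk ((sys n d l r ℓ p q).ext (.vR i))
          ((sys n d l r ℓ p q).ext (.xR)), W.length ≤ ℓ :=
        (sys n d l r ℓ p q).walk_path (.vxR i)
      obtain ⟨W3, h3⟩ : ∃ W : (sys n d l r ℓ p q).graph.Walk ((sys n d l r ℓ p q).ext (.vR i'))
          ((sys n d l r ℓ p q).ext (.xR)), W.length ≤ ℓ :=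
        (sys n d l r ℓ p q).walk_path (.vxR i')
      refine ⟨W1.append (W2.append W3.reverse), ?_⟩
      rw [SimpleGraph.Walk.length_append, SimpleGraph.Walk.length_append,
        SimpleGraph.Walk.length_reverse]
      omega

end GraphOV
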